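/- Field structure of the inframetric completion (norm −1 case): let {x_i} ⊆ ℤ[θ] be a |·|_θ-Cauchy sequence such that |x_i|_θ does not converge to 0. Then there exists a |·|_θ-Cauchy sequence {y_i} ⊆ ℤ[θ] with |x_i·y_i − 1|_θ → 0; that is, every nonzero element of the inframetric completion of ℤ[θ] is invertible, so this completion is a field. -/

import Mathlib

/-!
The Galois conjugation identifies the infranorm, up to a factor `θ`, with the ordinary absolute
value of the conjugate: `θ⁻¹ |x|_θ ≤ |x'| ≤ θ |x|_θ` for every `x ∈ ℤ[θ]`
(`abs_conj_le_thNorm`, `thNorm_le_abs_conj`). Since the conjugates of `ℤ[θ]` are dense in `ℝ`, the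
completion is a copy of `ℝ`: the conjugates of the given Cauchy sequence converge to a real
`L ≠ 0`, and any sequence in `ℤ[θ]` whose conjugates tend to `L⁻¹` is an inverse.

The comparison of norms has two ingredients.

* Digit estimates (`conj_sum_bounds`, `conj_sum_lower`): if `b` is admissible on `[0, M]`, then
  `∑ b_i θ'^i` lies in `[-1, θ]`, and it is at least `θ⁻¹` when `b_0 ≠ 0`. Both come from Horner's
  scheme and `θ = a + θ⁻¹`. At the maximal exponent `k = v(x)` the lowest digit of `x / θ^k` is
  nonzero, so both bounds apply.
* Finiteness (`exists_admissible`, `exists_rep_of_pos`): every positive element of `ℤ[θ]` has a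
  finite admissible expansion, so that `v(x)` is a genuine maximum. A positive element is a sum of
  finitely many powers of `θ`; a sum of `N` powers is normalised by induction on `N`, splitting off
  the largest power that can occur in any expression of it as a sum of `N` powers.
-/

noncomputable section

/-- The real quadratic unit `θ = (a + √(a²+4))/2`, the positive root of `θ² = aθ + 1`
(the norm `N(θ) = −1` case). -/
def theta (a : ℕ) : ℝ := ((a : ℝ) + Real.sqrt ((a : ℝ) ^ 2 + 4)) / 2

/-- The Galois conjugate `θ' = −θ⁻¹`. -/
def thetaConj (a : ℕ) : ℝ := -(theta a)⁻¹

/-- Membership in the ring `ℤ[θ]`. -/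
def inOK (a : ℕ) (x : ℝ) : Prop := ∃ p q : ℤ, x = (p : ℝ) + (q : ℝ) * theta a

/-- A finite integer sequence, supported in `[m, M]`, is admissible (norm `−1` case) if all its
entries lie in `{0, …, a}` and an entry equal to `a` is always followed (below) by a `0`. -/
def AdmissibleOn (a : ℕ) (m M : ℤ) (b : ℤ → ℤ) : Prop :=
  (∀ i, b i ≠ 0 → m ≤ i ∧ i ≤ M) ∧
  (∀ i, 0 ≤ b i ∧ b i ≤ (a : ℤ)) ∧
  (∀ i, b i = (a : ℤ) → b (i - 1) = 0)

/-- The set `ℤ_θ` of θ-integers: signed sums `± Σ_{i=0}^{M} b_i θ^i` with `(b_i)` admissible. -/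
def Ztheta (a : ℕ) : Set ℝ :=
  { x | ∃ (ε : ℤ) (M : ℤ) (b : ℤ → ℤ), (ε = 1 ∨ ε = -1) ∧ 0 ≤ M ∧
      AdmissibleOn a 0 M b ∧
      x = (ε : ℝ) * ∑ i ∈ Finset.Icc (0 : ℤ) M, (b i : ℝ) * theta a ^ i }

/-- `v(x) = max { k : ℤ | x / θ^k ∈ ℤ_θ }` (as a supremum in `ℤ`). -/
def vval (a : ℕ) (x : ℝ) : ℤ := sSup { k : ℤ | x / theta a ^ k ∈ Ztheta a }

/-- The θ-adic infranorm `|x|_θ = θ^{−v(x)}`, with `|0|_θ = 0`. -/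
def thNorm (a : ℕ) (x : ℝ) : ℝ := if x = 0 then 0 else theta a ^ (-vval a x)

/-- A sequence in `ℝ` is `|·|_θ`-Cauchy. -/
def IsThCauchy (a : ℕ) (x : ℕ → ℝ) : Prop :=
  ∀ ε : ℝ, 0 < ε → ∃ N : ℕ, ∀ i j : ℕ, N ≤ i → N ≤ j → thNorm a (x i - x j) < ε

/-! ### The unit `θ` and conjugation -/

lemma theta_sq (a : ℕ) : theta a ^ 2 = a * theta a + 1 := by
  have h : Real.sqrt ((a : ℝ) ^ 2 + 4) ^ 2 = (a : ℝ) ^ 2 + 4 := Real.sq_sqrt (by positivity)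
  unfold theta
  linear_combination h / 4

lemma theta_pos (a : ℕ) : 0 < theta a := by
  unfold theta
  positivity

lemma theta_eq (a : ℕ) : theta a = a + (theta a)⁻¹ := by
  have h := theta_sq a
  have h0 := (theta_pos a).ne'
  field_simp
  linear_combination h

lemma one_lt_theta {a : ℕ} (ha : 1 ≤ a) : 1 < theta a := by
  have h : (1 : ℝ) ≤ a := by exact_mod_cast ha
  have h1 := theta_eq a
  have h2 : 0 < (theta a)⁻¹ := inv_pos.2 (theta_pos a)
  linarith

lemma thetaConj_sq (a : ℕ) : thetaConj a ^ 2 = a * thetaConj a + 1 := by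
  have h := theta_sq a
  have h0 := (theta_pos a).ne'
  unfold thetaConj
  field_simp
  linear_combination -h

lemma abs_thetaConj (a : ℕ) : |thetaConj a| = (theta a)⁻¹ := by
  rw [thetaConj, abs_neg, abs_of_pos (inv_pos.2 (theta_pos a))]

lemma thetaConj_ne_zero (a : ℕ) : thetaConj a ≠ 0 :=
  neg_ne_zero.2 (inv_ne_zero (theta_pos a).ne')

lemma abs_thetaConj_zpow (a : ℕ) (k : ℤ) : |thetaConj a ^ k| = theta a ^ (-k) := by
  rw [abs_zpow, abs_thetaConj, inv_zpow, zpow_neg]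

lemma theta_irrational {a : ℕ} (ha : 1 ≤ a) : Irrational (theta a) := by
  have hs : Irrational (Real.sqrt ((a ^ 2 + 4 : ℕ) : ℝ)) := by
    rw [irrational_sqrt_natCast_iff]
    rintro ⟨r, hr⟩
    have h1 : a < r := by nlinarith
    obtain rfl | h2 : r = a + 1 ∨ a + 2 ≤ r := by omega
    · have : 2 * a = 3 := by nlinarith
      omega
    · nlinarith
  have h := (hs.natCast_add a).div_natCast (m := 2) (by norm_num)
  simpa [theta] using h

/-- The ring `ℤ[θ]` embedded in `ℝ × ℝ` as the set of pairs `(x, x')`, that is, the graph of the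
Galois conjugation. -/
def conjGraph (a : ℕ) : Subring (ℝ × ℝ) where
  carrier := {z | ∃ p q : ℤ, z.1 = p + q * theta a ∧ z.2 = p + q * thetaConj a}
  one_mem' := ⟨1, 0, by simp, by simp⟩
  zero_mem' := ⟨0, 0, by simp, by simp⟩
  neg_mem' := by
    rintro z ⟨p, q, h1, h2⟩
    refine ⟨-p, -q, ?_, ?_⟩
    · simp [h1]; ring
    · simp [h2]; ring
  add_mem' := by
    rintro z w ⟨p, q, h1, h2⟩ ⟨r, s, h3, h4⟩
    refine ⟨p + r, q + s, ?_, ?_⟩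
    · simp [h1, h3]; ring
    · simp [h2, h4]; ring
  mul_mem' := by
    rintro z w ⟨p, q, h1, h2⟩ ⟨r, s, h3, h4⟩
    refine ⟨p * r + q * s, p * s + q * r + a * q * s, ?_, ?_⟩
    · simp only [Prod.fst_mul, h1, h3]
      push_cast
      linear_combination (q * s : ℝ) * theta_sq a
    · simp only [Prod.snd_mul, h2, h4]
      push_cast
      linear_combination (q * s : ℝ) * thetaConj_sq a

lemma conjGraph_intCast (a : ℕ) (n : ℤ) : ((n : ℝ), (n : ℝ)) ∈ conjGraph a :=
  ⟨n, 0, by simp, by simp⟩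

lemma conjGraph_zpow (a : ℕ) (k : ℤ) : (theta a ^ k, thetaConj a ^ k) ∈ conjGraph a := by
  have h1 : (theta a, thetaConj a) ∈ conjGraph a := ⟨0, 1, by simp, by simp⟩
  have h2 : ((theta a)⁻¹, (thetaConj a)⁻¹) ∈ conjGraph a := by
    refine ⟨-a, 1, ?_, ?_⟩
    · push_cast
      linarith [theta_eq a]
    · simp only [thetaConj, inv_neg, inv_inv]
      push_cast
      linarith [theta_eq a]
  obtain ⟨n, rfl | rfl⟩ := k.eq_nat_or_neg
  · simpa using pow_mem h1 n
  · simpa using pow_mem h2 n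

/-- Conjugation is well defined, because `θ` is irrational. -/
lemma conjGraph_zero {a : ℕ} (ha : 1 ≤ a) {y : ℝ} (h : ((0 : ℝ), y) ∈ conjGraph a) : y = 0 := by
  obtain ⟨p, q, h1, h2⟩ := h
  simp only at h1 h2
  have hq : q = 0 := by
    by_contra hq
    refine ((theta_irrational ha).intCast_mul hq).ne_int (-p) ?_
    push_cast
    linarith
  subst hq
  simp only [Int.cast_zero, zero_mul, add_zero] at h1 h2
  rw [h2, ← h1]

lemma conjGraph_unique {a : ℕ} (ha : 1 ≤ a) {x y z : ℝ} (h : (x, y) ∈ conjGraph a)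
    (h' : (x, z) ∈ conjGraph a) : y = z := by
  have h2 := sub_mem h h'
  rw [Prod.mk_sub_mk, sub_self] at h2
  exact sub_eq_zero.1 (conjGraph_zero ha h2)

/-! ### Digit estimates for the conjugate -/

lemma horner (t : ℝ) (b : ℕ → ℤ) (n : ℕ) :
    ∑ i ∈ Finset.range (n + 1), (b i : ℝ) * t ^ i
      = b 0 + t * ∑ i ∈ Finset.range n, (b (i + 1) : ℝ) * t ^ i := by
  rw [Finset.sum_range_succ', Finset.mul_sum, add_comm]
  simp only [pow_zero, mul_one]
  congr 1
  exact Finset.sum_congr rfl fun i _ => by ring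

lemma conj_sum_bounds (a : ℕ) (n : ℕ) : ∀ b : ℕ → ℤ, (∀ i, 0 ≤ b i ∧ b i ≤ a) →
    -1 ≤ ∑ i ∈ Finset.range n, (b i : ℝ) * thetaConj a ^ i ∧
      ∑ i ∈ Finset.range n, (b i : ℝ) * thetaConj a ^ i ≤ theta a := by
  induction n with
  | zero =>
    intro b _
    simp [(theta_pos a).le]
  | succ n ih =>
    intro b hb
    rw [horner]
    obtain ⟨h1, h2⟩ := ih (fun i => b (i + 1)) fun i => hb (i + 1)
    set S := ∑ i ∈ Finset.range n, (b (i + 1) : ℝ) * thetaConj a ^ i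
    have hb0 : (0 : ℝ) ≤ b 0 := by exact_mod_cast (hb 0).1
    have hb1 : (b 0 : ℝ) ≤ a := by exact_mod_cast (hb 0).2
    have hp : 0 < (theta a)⁻¹ := inv_pos.2 (theta_pos a)
    have h3 := theta_eq a
    have h4 : (theta a)⁻¹ * theta a = 1 := inv_mul_cancel₀ (theta_pos a).ne'
    have h5 := mul_le_mul_of_nonneg_left h1 hp.le
    have h6 := mul_le_mul_of_nonneg_left h2 hp.le
    unfold thetaConj
    constructor <;> nlinarith

/-- If the lowest digit is nonzero, admissibility forces the next one to be at most `a - 1`, so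
the lowest term dominates the conjugate. -/
lemma conj_sum_lower {a : ℕ} (ha : 1 ≤ a) (n : ℕ) (b : ℕ → ℤ) (hb : ∀ i, 0 ≤ b i ∧ b i ≤ a)
    (h0 : 1 ≤ b 0) (h1 : b 1 ≤ a - 1) :
    (theta a)⁻¹ ≤ ∑ i ∈ Finset.range (n + 1), (b i : ℝ) * thetaConj a ^ i := by
  have hp : 0 < (theta a)⁻¹ := inv_pos.2 (theta_pos a)
  have h3 := theta_eq a
  have h4 : (theta a)⁻¹ * theta a = 1 := inv_mul_cancel₀ (theta_pos a).ne'
  have hθ := one_lt_theta ha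
  have hb0 : (1 : ℝ) ≤ b 0 := by exact_mod_cast h0
  have hb1 : (b 1 : ℝ) ≤ a - 1 := by exact_mod_cast h1
  have key : ∑ i ∈ Finset.range n, (b (i + 1) : ℝ) * thetaConj a ^ i ≤ theta a - 1 := by
    cases n with
    | zero => simpa using hθ.le
    | succ n =>
      have h := horner (thetaConj a) (fun i => b (i + 1)) n
      rw [h]
      have h5 := (conj_sum_bounds a n (fun i => b (i + 1 + 1)) fun i => hb _).1
      have h6 := mul_le_mul_of_nonneg_left h5 hp.le
      unfold thetaConj at h6 ⊢
      linarith
  rw [horner]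
  have h6 := mul_le_mul_of_nonneg_left key hp.le
  unfold thetaConj at h6 ⊢
  linarith

lemma sum_Icc_eq_range (f : ℤ → ℝ) (n : ℕ) :
    ∑ i ∈ Finset.Icc (0 : ℤ) n, f i = ∑ i ∈ Finset.range (n + 1), f (i : ℤ) := by
  refine Finset.sum_nbij' Int.toNat (fun i => (i : ℤ)) ?_ ?_ ?_ ?_ ?_
  · intro i hi
    simp only [Finset.mem_Icc, Finset.mem_range] at hi ⊢
    omega
  · intro i hi
    simp only [Finset.mem_Icc, Finset.mem_range] at hi ⊢
    omega
  · intro i hi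
    simp only [Finset.mem_Icc] at hi
    omega
  · intro i _
    simp
  · intro i hi
    simp only [Finset.mem_Icc] at hi
    rw [Int.toNat_of_nonneg hi.1]

/-! ### Finiteness of expansions -/

/-- The value `∑ c_i θ^i` of a finitely supported family of nonnegative digits. -/
def digitVal (a : ℕ) (c : ℤ →₀ ℕ) : ℝ := c.sum fun i n => (n : ℝ) * theta a ^ i

/-- The sum of the digits. -/
def digitCount (c : ℤ →₀ ℕ) : ℕ := c.sum fun _ n => n

lemma digitVal_add (a : ℕ) (c d : ℤ →₀ ℕ) :
    digitVal a (c + d) = digitVal a c + digitVal a d :=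
  Finsupp.sum_add_index' (by simp) (by intros; push_cast; ring)

lemma digitVal_single (a : ℕ) (i : ℤ) (n : ℕ) :
    digitVal a (Finsupp.single i n) = n * theta a ^ i :=
  Finsupp.sum_single_index (by simp)

lemma digitCount_add (c d : ℤ →₀ ℕ) : digitCount (c + d) = digitCount c + digitCount d :=
  Finsupp.sum_add_index' (by simp) (by intros; rfl)

lemma digitCount_single (i : ℤ) (n : ℕ) : digitCount (Finsupp.single i n) = n :=
  Finsupp.sum_single_index rfl

lemma digitVal_nonneg (a : ℕ) (c : ℤ →₀ ℕ) : 0 ≤ digitVal a c :=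
  Finset.sum_nonneg fun i _ => mul_nonneg (Nat.cast_nonneg _) (zpow_pos (theta_pos a) i).le

lemma exists_split (c : ℤ →₀ ℕ) (i : ℤ) (n : ℕ) (h : n ≤ c i) :
    ∃ d : ℤ →₀ ℕ, c = d + Finsupp.single i n :=
  ⟨c - Finsupp.single i n, (tsub_add_cancel_of_le (Finsupp.single_le_iff.2 h)).symm⟩

lemma theta_zpow_rec (a : ℕ) (m : ℤ) :
    theta a ^ (m + 1) = a * theta a ^ m + theta a ^ (m - 1) := by
  have h0 := (theta_pos a).ne'
  have h1 : theta a ^ m = theta a ^ (m - 1) * theta a := by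
    rw [← zpow_add_one₀ h0, sub_add_cancel]
  rw [zpow_add_one₀ h0, h1]
  linear_combination theta a ^ (m - 1) * theta_sq a

/-- A sum of `N` powers of `θ` has an admissible expansion with digit sum at most `N`. The
rewriting rules are `a θ^m + θ^(m-1) = θ^(m+1)`, which lowers the digit sum, and
`(a+1) θ^m = θ^(m+1) + (a-1) θ^(m-1) + θ^(m-2)`, which keeps it and raises the top exponent. -/
lemma exists_admissible {a : ℕ} (ha : 1 ≤ a) (N : ℕ) : ∀ c : ℤ →₀ ℕ, digitCount c = N →
    ∃ e : ℤ →₀ ℕ, (∀ i, e i ≤ a ∧ (e i = a → e (i - 1) = 0)) ∧ digitCount e ≤ N ∧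
      digitVal a e = digitVal a c := by
  induction N using Nat.strong_induction_on with
  | _ N ih =>
  intro c hc
  have hθ := one_lt_theta ha
  by_cases hc0 : c = 0
  · subst hc0
    refine ⟨0, fun i => ⟨by simp, fun _ => by simp⟩, ?_, rfl⟩
    simp [digitCount]
  -- A shorter expression of the same number is handled by the induction hypothesis.
  have short : ∀ d : ℤ →₀ ℕ, digitCount d < N → digitVal a d = digitVal a c →
      ∃ e : ℤ →₀ ℕ, (∀ i, e i ≤ a ∧ (e i = a → e (i - 1) = 0)) ∧ digitCount e ≤ N ∧
        digitVal a e = digitVal a c := by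
    intro d hd hv
    obtain ⟨e, he1, he2, he3⟩ := ih _ hd d rfl
    exact ⟨e, he1, he2.trans hd.le, he3.trans hv⟩
  let P : ℤ → Prop := fun m => ∃ d : ℤ →₀ ℕ, digitCount (d + Finsupp.single m 1) = N ∧
    digitVal a (d + Finsupp.single m 1) = digitVal a c
  have hbdd : ∃ B : ℤ, ∀ m, P m → m ≤ B := by
    obtain ⟨n, hn⟩ := pow_unbounded_of_one_lt (digitVal a c) hθ
    refine ⟨n, ?_⟩
    rintro m ⟨d, -, hd⟩
    rw [digitVal_add, digitVal_single] at hd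
    have h1 := digitVal_nonneg a d
    have h2 : theta a ^ m < theta a ^ (n : ℤ) := by
      rw [zpow_natCast]
      push_cast at hd
      linarith
    exact ((zpow_lt_zpow_iff_right₀ hθ).1 h2).le
  have hne : ∃ m, P m := by
    obtain ⟨m, hm⟩ := Finsupp.ne_iff.1 hc0
    obtain ⟨d, hd⟩ := exists_split c m 1 (Nat.one_le_iff_ne_zero.2 (by simpa using hm))
    exact ⟨m, d, by rw [← hd, hc], by rw [← hd]⟩
  obtain ⟨m, ⟨d, hdN, hdv⟩, hmax⟩ := Int.exists_greatest_of_bdd hbdd hne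
  rw [digitCount_add, digitCount_single] at hdN
  rw [digitVal_add] at hdv
  obtain ⟨e, he1, he2, he3⟩ := ih (digitCount d) (by omega) d rfl
  by_cases hlt : digitCount e < digitCount d
  · refine short (e + Finsupp.single m 1) ?_ ?_
    · rw [digitCount_add, digitCount_single]
      omega
    · rw [digitVal_add, he3, hdv]
  have heq : digitCount e = digitCount d := by omega
  have htop : ∀ i, m < i → e i = 0 := by
    intro i hi
    by_contra hne
    obtain ⟨e', rfl⟩ := exists_split e i 1 (Nat.one_le_iff_ne_zero.2 hne)
    have : P i := by
      refine ⟨e' + Finsupp.single m 1, ?_, ?_⟩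
      · simp only [digitCount_add, digitCount_single] at heq ⊢
        omega
      · simp only [digitVal_add] at he3 ⊢
        rw [← hdv, ← he3]
        ring
    exact absurd (hmax i this) (not_le.2 hi)
  have hrec := theta_zpow_rec a m
  have hem : e m < a := by
    refine lt_of_le_of_ne (he1 m).1 fun hem => ?_
    obtain ⟨e', rfl⟩ := exists_split e m a hem.ge
    have hrec2 := theta_zpow_rec a (m - 1)
    rw [sub_add_cancel, sub_sub] at hrec2
    have : P (m + 1) := by
      refine ⟨e' + Finsupp.single (m - 1) (a - 1) + Finsupp.single (m - 2) 1, ?_, ?_⟩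
      · simp only [digitCount_add, digitCount_single] at heq ⊢
        omega
      · simp only [digitVal_add, digitVal_single] at he3 hdv ⊢
        push_cast [Nat.cast_sub ha]
        push_cast at hdv
        norm_num at hrec2
        linear_combination hrec - hrec2 + he3 + hdv
    exact absurd (hmax _ this) (by omega)
  by_cases hcarry : e m = a - 1 ∧ e (m - 1) ≠ 0
  · obtain ⟨h1, h2⟩ := hcarry
    obtain ⟨e', rfl⟩ := exists_split e m (a - 1) h1.ge
    have h3 : e' (m - 1) ≠ 0 := by
      simpa [Finsupp.single_apply] using h2
    obtain ⟨e'', rfl⟩ := exists_split e' (m - 1) 1 (Nat.one_le_iff_ne_zero.2 h3)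
    refine short (e'' + Finsupp.single (m + 1) 1) ?_ ?_
    · simp only [digitCount_add, digitCount_single] at heq ⊢
      omega
    · simp only [digitVal_add, digitVal_single] at he3 hdv ⊢
      push_cast [Nat.cast_sub ha] at he3 hdv ⊢
      linear_combination hrec + he3 + hdv
  · refine ⟨e + Finsupp.single m 1, fun i => ?_, ?_, ?_⟩
    · have hi := he1 i
      rcases lt_trichotomy i m with him | rfl | him
      · have h1 : m ≠ i := by omega
        have h2 : m ≠ i - 1 := by omega
        simpa [Finsupp.single_apply, h1, h2] using hi
      · have h2 : i ≠ i - 1 := by omega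
        simp only [Finsupp.add_apply, Finsupp.single_apply, if_true, h2, if_false, add_zero]
        refine ⟨hem, fun h => ?_⟩
        by_contra h3
        exact hcarry ⟨by omega, h3⟩
      · have h1 : m ≠ i := by omega
        simp only [Finsupp.add_apply, Finsupp.single_apply, h1, if_false, htop i him]
        exact ⟨by omega, fun h => by omega⟩
    · rw [digitCount_add, digitCount_single]
      omega
    · rw [digitVal_add, he3, hdv]

/-- Multiplying a positive `x ∈ ℤ[θ]` by a large power `θ^n` shrinks its conjugate, and then both
coordinates of `x θ^n` in the basis `1, θ` are nonnegative. -/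
lemma exists_rep_of_pos {a : ℕ} (ha : 1 ≤ a) {x y : ℝ} (h : (x, y) ∈ conjGraph a) (hx : 0 < x) :
    ∃ c : ℤ →₀ ℕ, digitVal a c = x := by
  have hθ := one_lt_theta ha
  have hθ0 := theta_pos a
  have hp : 0 < (theta a)⁻¹ := inv_pos.2 hθ0
  obtain ⟨n, hn⟩ := pow_unbounded_of_one_lt (|y| * theta a + |y| / x) hθ
  have hm := mul_mem h (conjGraph_zpow a n)
  rw [Prod.mk_mul_mk] at hm
  obtain ⟨p, q, h1, h2⟩ := hm
  simp only [zpow_natCast] at h1 h2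
  have hpow : 0 < theta a ^ n := pow_pos hθ0 n
  have hone : 1 ≤ theta a ^ n := one_le_pow₀ hθ.le
  have hδ : |y * thetaConj a ^ n| = |y| / theta a ^ n := by
    rw [abs_mul, abs_pow, abs_thetaConj, inv_pow, div_eq_mul_inv]
  have hy := abs_nonneg y
  have hyx : 0 ≤ |y| / x := by positivity
  have hyθ : 0 ≤ |y| * theta a := by positivity
  have hδ1 : |y * thetaConj a ^ n| < (theta a)⁻¹ := by
    rw [hδ, div_lt_iff₀ hpow, inv_mul_eq_div, lt_div_iff₀ hθ0]
    linarith
  have hδ2 : |y * thetaConj a ^ n| < x * theta a ^ n := by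
    rw [hδ, div_lt_iff₀ hpow]
    have h3 : |y| / x < theta a ^ n := by linarith
    rw [div_lt_iff₀ hx] at h3
    nlinarith [mul_pos hx hpow]
  rw [h2] at hδ1 hδ2
  rw [h1] at hδ2
  unfold thetaConj at hδ1 hδ2
  have hq : 0 < q := by
    have h3 := (le_abs_self _).trans_lt hδ2
    have h4 : (0 : ℝ) < q * (theta a + (theta a)⁻¹) := by linarith
    exact_mod_cast (pos_iff_pos_of_mul_pos h4).2 (by positivity)
  have hp0 : 0 ≤ p := by
    have h3 := (abs_lt.1 hδ1).1
    have h4 : (1 : ℝ) ≤ q := by exact_mod_cast hq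
    have h5 : (0 : ℝ) < p := by nlinarith
    exact_mod_cast h5.le
  lift p to ℕ using hp0
  lift q to ℕ using hq.le
  refine ⟨Finsupp.single (-n : ℤ) p + Finsupp.single (-n + 1 : ℤ) q, ?_⟩
  rw [digitVal_add, digitVal_single, digitVal_single, zpow_add_one₀ hθ0.ne', zpow_neg,
    zpow_natCast]
  push_cast at h1
  field_simp
  linear_combination -h1

/-- An admissible finitely supported digit family gives a `θ`-integer after a shift. -/
lemma digitVal_div_mem {a : ℕ} (e : ℤ →₀ ℕ)
    (he : ∀ i, e i ≤ a ∧ (e i = a → e (i - 1) = 0)) (ε : ℤ) (hε : ε = 1 ∨ ε = -1) :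
    ∃ k : ℤ, (ε * digitVal a e) / theta a ^ k ∈ Ztheta a := by
  obtain ⟨k, hk⟩ := e.support.bddBelow
  obtain ⟨K, hK⟩ := e.support.bddAbove
  have hsupp : ∀ i, e i ≠ 0 → k ≤ i ∧ i ≤ K := fun i hi =>
    ⟨hk (Finsupp.mem_support_iff.2 hi), hK (Finsupp.mem_support_iff.2 hi)⟩
  refine ⟨k, ε, max (K - k) 0, fun i => e (i + k), hε, le_max_right _ _,
    ⟨fun i hi => ?_, fun i => ⟨Nat.cast_nonneg _, Nat.cast_le.2 (he _).1⟩, fun i hi => ?_⟩, ?_⟩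
  · have := hsupp (i + k) (Nat.cast_ne_zero.1 hi)
    have := le_max_left (K - k) 0
    omega
  · have := (he (i + k)).2 (Nat.cast_injective hi)
    rw [show i + k - 1 = i - 1 + k by ring] at this
    exact Nat.cast_eq_zero.2 this
  · rw [mul_div_assoc]
    congr 1
    have hsub : e.support ⊆ Finset.Icc k (k + max (K - k) 0) := by
      intro i hi
      have := hsupp i (Finsupp.mem_support_iff.1 hi)
      have := le_max_left (K - k) 0
      rw [Finset.mem_Icc]
      omega
    rw [digitVal, Finsupp.sum_of_support_subset _ hsub _ (by simp), Finset.sum_div]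
    refine Finset.sum_nbij' (fun i => i - k) (fun i => i + k) ?_ ?_ ?_ ?_ ?_
    · intro i hi
      simp only [Finset.mem_Icc] at hi ⊢
      omega
    · intro i hi
      simp only [Finset.mem_Icc] at hi ⊢
      omega
    · intro i _
      simp
    · intro i _
      simp
    · intro i _
      simp only [sub_add_cancel, Int.cast_natCast]
      rw [zpow_sub₀ (theta_pos a).ne', mul_div_assoc]

lemma exists_div_mem {a : ℕ} (ha : 1 ≤ a) {x y : ℝ} (h : (x, y) ∈ conjGraph a) (hx : x ≠ 0) :
    ∃ k : ℤ, x / theta a ^ k ∈ Ztheta a := by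
  rcases lt_or_gt_of_ne hx with hx | hx
  · have h' := neg_mem h
    obtain ⟨c, hc⟩ := exists_rep_of_pos ha (x := -x) (y := -y) h' (by linarith)
    obtain ⟨e, he1, -, he3⟩ := exists_admissible ha _ c rfl
    obtain ⟨k, hk⟩ := digitVal_div_mem e he1 (-1) (Or.inr rfl)
    refine ⟨k, ?_⟩
    rw [he3, hc] at hk
    simpa using hk
  · obtain ⟨c, hc⟩ := exists_rep_of_pos ha h hx
    obtain ⟨e, he1, -, he3⟩ := exists_admissible ha _ c rfl
    obtain ⟨k, hk⟩ := digitVal_div_mem e he1 1 (Or.inl rfl)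
    refine ⟨k, ?_⟩
    rw [he3, hc] at hk
    simpa using hk

/-! ### Comparison of the infranorm with the conjugate -/

/-- A `θ`-integer whose lowest digit vanishes is `θ` times a `θ`-integer. -/
lemma shift_mem {a : ℕ} {ε M : ℤ} {b : ℤ → ℤ} (hε : ε = 1 ∨ ε = -1) (hM : 0 ≤ M)
    (hb : AdmissibleOn a 0 M b) (h0 : b 0 = 0) :
    ((ε : ℝ) * ∑ i ∈ Finset.Icc (0 : ℤ) M, (b i : ℝ) * theta a ^ i) / theta a ∈ Ztheta a := by
  obtain ⟨hb1, hb2, hb3⟩ := hb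
  refine ⟨ε, M, fun i => b (i + 1), hε, hM, ⟨fun i hi => ?_, fun i => hb2 _, fun i hi => ?_⟩, ?_⟩
  · have h1 := hb1 _ hi
    have h2 : i + 1 ≠ 0 := fun h => hi (by simp only [h, h0])
    omega
  · have := hb3 _ hi
    rwa [show i + 1 - 1 = i - 1 + 1 by ring] at this
  · rw [mul_div_assoc]
    congr 1
    have e1 : ∑ i ∈ Finset.Icc (0 : ℤ) M, (b i : ℝ) * theta a ^ i
        = ∑ i ∈ Finset.Icc (0 : ℤ) (M + 1), (b i : ℝ) * theta a ^ i := by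
      refine Finset.sum_subset (Finset.Icc_subset_Icc_right (by omega)) fun i _ hi => ?_
      have : b i = 0 := by
        by_contra h
        exact hi (Finset.mem_Icc.2 (hb1 i h))
      simp [this]
    have e2 : ∑ i ∈ Finset.Icc (1 : ℤ) (M + 1), (b i : ℝ) * theta a ^ i
        = ∑ i ∈ Finset.Icc (0 : ℤ) (M + 1), (b i : ℝ) * theta a ^ i := by
      refine Finset.sum_subset (Finset.Icc_subset_Icc_left (by omega)) fun i hi hi' => ?_
      have : i = 0 := by
        simp only [Finset.mem_Icc] at hi hi'
        omega
      simp [this, h0]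
    rw [e1, ← e2, Finset.sum_div]
    refine Finset.sum_nbij' (fun i => i - 1) (fun i => i + 1) ?_ ?_ ?_ ?_ ?_
    · intro i hi
      simp only [Finset.mem_Icc] at hi ⊢
      omega
    · intro i hi
      simp only [Finset.mem_Icc] at hi ⊢
      omega
    · intro i _
      simp
    · intro i _
      simp
    · intro i _
      simp only [sub_add_cancel]
      rw [zpow_sub_one₀ (theta_pos a).ne', mul_div_assoc, div_eq_mul_inv]

/-- If `x / θ^k` is a `θ`-integer then `|x'| ≤ θ · θ^(-k)`, and either `x / θ^(k+1)` is one as well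
or `|x'| ≥ θ⁻¹ · θ^(-k)`. -/
lemma bounds_of_mem {a : ℕ} (ha : 1 ≤ a) {x y : ℝ} (h : (x, y) ∈ conjGraph a) {k : ℤ}
    (hk : x / theta a ^ k ∈ Ztheta a) :
    |y| ≤ theta a * theta a ^ (-k) ∧
      (x / theta a ^ (k + 1) ∈ Ztheta a ∨ (theta a)⁻¹ * theta a ^ (-k) ≤ |y|) := by
  obtain ⟨ε, M, b, hε, hM, hb, hxe⟩ := hk
  have hθ := one_lt_theta ha
  have hθ0 := theta_pos a
  have hk0 : 0 < theta a ^ k := zpow_pos hθ0 k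
  have hk1 : 0 < theta a ^ (-k) := zpow_pos hθ0 (-k)
  set S := ∑ i ∈ Finset.Icc (0 : ℤ) M, (b i : ℝ) * thetaConj a ^ i with hS
  have hy : y = ε * S * thetaConj a ^ k := by
    refine conjGraph_unique ha h ?_
    have hsum : (∑ i ∈ Finset.Icc (0 : ℤ) M, (b i : ℝ) * theta a ^ i, S) ∈ conjGraph a := by
      have : ∑ i ∈ Finset.Icc (0 : ℤ) M,
          ((b i : ℝ), (b i : ℝ)) * (theta a ^ i, thetaConj a ^ i) ∈ conjGraph a :=
        sum_mem fun i _ => mul_mem (conjGraph_intCast a (b i)) (conjGraph_zpow a i)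
      convert this using 1
      ext
      · simp [Prod.fst_sum]
      · simp [Prod.snd_sum, hS]
    have h3 := mul_mem (mul_mem (conjGraph_intCast a ε) hsum) (conjGraph_zpow a k)
    rw [Prod.mk_mul_mk, Prod.mk_mul_mk, ← hxe, div_mul_cancel₀ _ hk0.ne'] at h3
    exact h3
  have hε1 : |(ε : ℝ)| = 1 := by rcases hε with rfl | rfl <;> simp
  have hyS : |y| = |S| * theta a ^ (-k) := by
    rw [hy, abs_mul, abs_mul, hε1, one_mul, abs_thetaConj_zpow]
  obtain ⟨n, rfl⟩ := Int.eq_ofNat_of_zero_le hM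
  have hS' : S = ∑ i ∈ Finset.range (n + 1), (b (i : ℤ) : ℝ) * thetaConj a ^ i := by
    rw [hS, sum_Icc_eq_range]
    simp
  rw [hyS]
  constructor
  · refine mul_le_mul_of_nonneg_right ?_ hk1.le
    obtain ⟨h1, h2⟩ := conj_sum_bounds a (n + 1) (fun i => b i) fun i => hb.2.1 i
    rw [← hS'] at h1 h2
    exact abs_le.2 ⟨by linarith, h2⟩
  · by_cases h0 : b 0 = 0
    · left
      have := shift_mem hε hM hb h0
      rw [← hxe, div_div, ← zpow_add_one₀ hθ0.ne'] at this
      exact this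
    · right
      refine mul_le_mul_of_nonneg_right (le_trans ?_ (le_abs_self _)) hk1.le
      have hb0 := hb.2.1 0
      have hb1 := hb.2.1 1
      have hb1' : b 1 ≠ a := fun h1 => h0 (by simpa using hb.2.2 1 h1)
      have := conj_sum_lower ha n (fun i => b i) (fun i => hb.2.1 i)
        (by simp only [Nat.cast_zero]; omega) (by simp only [Nat.cast_one]; omega)
      rwa [← hS'] at this

lemma vval_bounds {a : ℕ} (ha : 1 ≤ a) {x y : ℝ} (h : (x, y) ∈ conjGraph a) (hx : x ≠ 0) :
    |y| ≤ theta a * theta a ^ (-vval a x) ∧ (theta a)⁻¹ * theta a ^ (-vval a x) ≤ |y| := by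
  have hθ := one_lt_theta ha
  have hy : 0 < |y| := by
    refine abs_pos.2 fun hy => hx ?_
    obtain ⟨p, q, h1, h2⟩ := h
    simp only at h1 h2
    -- `x' = 0` gives `p θ = q`, so `p = q = 0` by irrationality.
    have h3 : (p : ℝ) * theta a = q := by
      have h0 := (theta_pos a).ne'
      rw [hy, thetaConj] at h2
      field_simp at h2
      linarith
    have hp : p = 0 := by
      by_contra hp
      exact ((theta_irrational ha).intCast_mul hp).ne_int q h3
    subst hp
    rw [h1, ← h3]
    simp
  have hne : {k : ℤ | x / theta a ^ k ∈ Ztheta a}.Nonempty := exists_div_mem ha h hx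
  have hbdd : BddAbove {k : ℤ | x / theta a ^ k ∈ Ztheta a} := by
    obtain ⟨n, hn⟩ := pow_unbounded_of_one_lt (theta a / |y|) hθ
    refine ⟨n, fun k hk => ?_⟩
    have h1 := (bounds_of_mem ha h hk).1
    have hk0 : 0 < theta a ^ k := zpow_pos (theta_pos a) k
    rw [zpow_neg, ← div_eq_mul_inv, le_div_iff₀ hk0, mul_comm, ← le_div_iff₀ hy] at h1
    rw [← zpow_natCast] at hn
    exact ((zpow_lt_zpow_iff_right₀ hθ).1 (h1.trans_lt hn)).le
  have hmem := Int.csSup_mem hne hbdd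
  obtain ⟨h1, h2⟩ := bounds_of_mem ha h hmem
  refine ⟨h1, h2.resolve_left fun h3 => ?_⟩
  have := le_csSup hbdd h3
  omega

lemma abs_conj_le_thNorm {a : ℕ} (ha : 1 ≤ a) {x y : ℝ} (h : (x, y) ∈ conjGraph a) :
    |y| ≤ theta a * thNorm a x := by
  by_cases hx : x = 0
  · subst hx
    simp [thNorm, conjGraph_zero ha h]
  · rw [thNorm, if_neg hx]
    exact (vval_bounds ha h hx).1

lemma thNorm_nonneg (a : ℕ) (x : ℝ) : 0 ≤ thNorm a x := by
  unfold thNorm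
  split_ifs
  · exact le_rfl
  · exact (zpow_pos (theta_pos a) _).le

lemma thNorm_le_abs_conj {a : ℕ} (ha : 1 ≤ a) {x y : ℝ} (h : (x, y) ∈ conjGraph a) :
    thNorm a x ≤ theta a * |y| := by
  by_cases hx : x = 0
  · rw [thNorm, if_pos hx]
    exact mul_nonneg (theta_pos a).le (abs_nonneg y)
  · rw [thNorm, if_neg hx]
    have := (vval_bounds ha h hx).2
    rwa [inv_mul_le_iff₀ (theta_pos a)] at this

lemma tendsto_thNorm_zero {a : ℕ} (ha : 1 ≤ a) {x z : ℕ → ℝ}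
    (h : ∀ i, (x i, z i) ∈ conjGraph a) (hz : Filter.Tendsto z Filter.atTop (nhds 0)) :
    Filter.Tendsto (fun i => thNorm a (x i)) Filter.atTop (nhds 0) := by
  have h1 : Filter.Tendsto (fun i => theta a * |z i|) Filter.atTop (nhds 0) := by
    simpa using hz.abs.const_mul (theta a)
  exact squeeze_zero (fun i => thNorm_nonneg a _) (fun i => thNorm_le_abs_conj ha (h i)) h1

/-- The conjugates of `ℤ[θ]` are dense in `ℝ`: round `r θ^(2n)` down and multiply by `θ'^(2n)`. -/
lemma exists_conj_tendsto {a : ℕ} (ha : 1 ≤ a) (r : ℝ) :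
    ∃ y w : ℕ → ℝ, (∀ i, (y i, w i) ∈ conjGraph a) ∧ Filter.Tendsto w Filter.atTop (nhds r) := by
  have hθ := one_lt_theta ha
  have hconj : ∀ n : ℕ, thetaConj a ^ (2 * n) = ((theta a) ^ (2 * n))⁻¹ := by
    intro n
    rw [thetaConj, Even.neg_pow (even_two_mul n), inv_pow]
  refine ⟨fun n => ⌊r * theta a ^ (2 * n)⌋ * theta a ^ (2 * n),
    fun n => ⌊r * theta a ^ (2 * n)⌋ * thetaConj a ^ (2 * n), fun n => ?_, ?_⟩
  · have := mul_mem (conjGraph_intCast a ⌊r * theta a ^ (2 * n)⌋)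
      (conjGraph_zpow a ((2 * n : ℕ) : ℤ))
    simpa only [Prod.mk_mul_mk, zpow_natCast] using this
  · have hlim : Filter.Tendsto (fun n : ℕ => ((theta a) ^ (2 * n))⁻¹) Filter.atTop (nhds 0) :=
      tendsto_inv_atTop_zero.comp ((tendsto_pow_atTop_atTop_of_one_lt hθ).comp
        (Filter.tendsto_id.const_mul_atTop' (by norm_num)))
    have hlow : Filter.Tendsto (fun n : ℕ => r - ((theta a) ^ (2 * n))⁻¹) Filter.atTop
        (nhds r) := by
      simpa using hlim.const_sub r
    refine tendsto_of_tendsto_of_tendsto_of_le_of_le hlow tendsto_const_nhds ?_ ?_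
    · intro n
      have hp : 0 < theta a ^ (2 * n) := pow_pos (theta_pos a) _
      have h1 := Int.sub_one_lt_floor (r * theta a ^ (2 * n))
      simp only [hconj]
      rw [← div_eq_mul_inv, le_div_iff₀ hp, sub_mul, inv_mul_cancel₀ hp.ne']
      exact h1.le
    · intro n
      have hp : 0 < theta a ^ (2 * n) := pow_pos (theta_pos a) _
      simp only [hconj]
      rw [← div_eq_mul_inv, div_le_iff₀ hp]
      exact Int.floor_le _

/-! ### Inverses in the completion -/

/-- Field structure of the inframetric completion, norm `−1` case. If
`{x_i} ⊆ ℤ[θ]` is a `|·|_θ`-Cauchy sequence with `|x_i|_θ ↛ 0`, then there is a `|·|_θ`-Cauchy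
sequence `{y_i} ⊆ ℤ[θ]` with `|x_i·y_i − 1|_θ → 0`; i.e. every nonzero element of the
inframetric completion of `ℤ[θ]` is invertible, so the completion is a field. -/
theorem completion_is_field (a : ℕ) (ha : 1 ≤ a) (x : ℕ → ℝ)
    (hx : ∀ i, inOK a (x i)) (hc : IsThCauchy a x)
    (hnz : ¬ Filter.Tendsto (fun i => thNorm a (x i)) Filter.atTop (nhds 0)) :
    ∃ y : ℕ → ℝ, (∀ i, inOK a (y i)) ∧ IsThCauchy a y ∧
      Filter.Tendsto (fun i => thNorm a (x i * y i - 1)) Filter.atTop (nhds 0) := by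
  have hθ0 := theta_pos a
  have hG : ∀ i, ∃ z : ℝ, (x i, z) ∈ conjGraph a := fun i => by
    obtain ⟨p, q, h⟩ := hx i
    exact ⟨p + q * thetaConj a, p, q, h, rfl⟩
  choose z hz using hG
  have hzc : CauchySeq z := by
    rw [Metric.cauchySeq_iff]
    intro ε hε
    obtain ⟨N, hN⟩ := hc (ε / theta a) (div_pos hε hθ0)
    refine ⟨N, fun i hi j hj => ?_⟩
    have h1 := hN i j hi hj
    rw [lt_div_iff₀ hθ0, mul_comm] at h1
    rw [Real.dist_eq]
    exact (abs_conj_le_thNorm ha (sub_mem (hz i) (hz j))).trans_lt h1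
  obtain ⟨L, hL⟩ := cauchySeq_tendsto_of_complete hzc
  have hL0 : L ≠ 0 := by
    rintro rfl
    exact hnz (tendsto_thNorm_zero ha hz hL)
  obtain ⟨y, w, hyw, hw⟩ := exists_conj_tendsto ha L⁻¹
  refine ⟨y, fun i => ?_, ?_, ?_⟩
  · obtain ⟨p, q, h, -⟩ := hyw i
    exact ⟨p, q, h⟩
  · intro ε hε
    obtain ⟨N, hN⟩ := Metric.cauchySeq_iff.1 hw.cauchySeq (ε / theta a) (div_pos hε hθ0)
    refine ⟨N, fun i j hi hj => ?_⟩
    have h1 := hN i hi j hj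
    rw [Real.dist_eq, lt_div_iff₀ hθ0, mul_comm] at h1
    exact (thNorm_le_abs_conj ha (sub_mem (hyw i) (hyw j))).trans_lt h1
  · refine tendsto_thNorm_zero ha (z := fun i => z i * w i - 1)
      (fun i => sub_mem (mul_mem (hz i) (hyw i)) (one_mem _)) ?_
    have h1 := (hL.mul hw).sub_const 1
    rwa [mul_inv_cancel₀ hL0, sub_self] at h1
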